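/- Let μ ∈ ℝ, set α := −iμ/2, and let u : ℝ → ℂ be twice continuously differentiable, satisfy the PII equation u''(x) = x·u(x) + 2·u(x)³ − α on ℝ, take purely imaginary values on ℝ, and satisfy the asymptotic expansion (A+): there exist x₀, K > 0 such that |u(x) − α/x − 2α(1−α²)·x^{−4} − 4α(1−α²)(10−3α²)·x^{−7}| ≤ K·x^{−10} for all x ≥ x₀. Define v(x) := (2/3^{1/3})·u(x/3^{1/3}). Then v'(x) − v(x)²/2 = a₂·x^{−2} + a₅·x^{−5} + O(x^{−8}) as x → +∞, where a₂ := iμ + μ²/2 and a₅ := (4+μ²)·(6iμ + 3μ²/2). -/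

import Mathlib

/-- The real cube root of 3. -/
noncomputable def cbrt3 : ℝ := (3 : ℝ) ^ ((1:ℝ)/3)

/-!
In the coordinate `s = 1/x` the truncated expansion in (A+) is a polynomial `w(s)`, chosen so that
it solves the Painlevé II equation up to `O(x⁻⁹)`. Since `u - w(1/x) = O(x⁻¹⁰)`, the equation itself
yields `(u - w(1/x))'' = O(x⁻⁹)`, and Landau's inequality on the unit interval `[x, x + 1]` bounds
the first derivative by the function and its second derivative. Hence
`u' = (d/dx) w(1/x) + O(x⁻⁹)`, so that `u' - u²` agrees up to `O(x⁻⁸)` with a polynomial in `s` that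
can be read off. Finally `v' - v²/2` is a rescaling of `u' - u²`.
-/

open Asymptotics Filter Polynomial Set Topology

section Landau

variable {E F : Type*} [NormedAddCommGroup E] [NormedSpace ℝ E] [SeminormedAddCommGroup F]
  {f f' f'' : ℝ → E}

theorem norm_sub_sub_smul_deriv_le_of_norm_deriv2_le {a b B : ℝ} (hab : a ≤ b)
    (hf : ∀ t ∈ Icc a b, HasDerivWithinAt f (f' t) (Icc a b) t)
    (hf' : ∀ t ∈ Icc a b, HasDerivWithinAt f' (f'' t) (Icc a b) t)
    (hB : ∀ t ∈ Icc a b, ‖f'' t‖ ≤ B) :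
    ‖f b - f a - (b - a) • f' a‖ ≤ B * (b - a) ^ 2 := by
  have ha : a ∈ Icc a b := left_mem_Icc.2 hab
  have hb : b ∈ Icc a b := right_mem_Icc.2 hab
  have hB₀ : 0 ≤ B := (norm_nonneg _).trans (hB a ha)
  have deriv_sub_le : ∀ t ∈ Icc a b, ‖f' t - f' a‖ ≤ B * (b - a) := by
    intro t ht
    calc ‖f' t - f' a‖ ≤ B * ‖t - a‖ :=
          (convex_Icc a b).norm_image_sub_le_of_norm_hasDerivWithin_le hf' hB ha ht
      _ ≤ B * (b - a) := by
          rw [Real.norm_of_nonneg (sub_nonneg.2 ht.1)]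
          gcongr
          exact ht.2
  have hasDeriv_tangent_error : ∀ t ∈ Icc a b,
      HasDerivWithinAt (fun y => f y - y • f' a) (f' t - f' a) (Icc a b) t := fun t ht => by
    simpa using (hf t ht).fun_sub ((hasDerivWithinAt_id t _).smul_const (f' a))
  calc ‖f b - f a - (b - a) • f' a‖ = ‖(f b - b • f' a) - (f a - a • f' a)‖ := by
        congr 1; module
    _ ≤ B * (b - a) * ‖b - a‖ :=
        (convex_Icc a b).norm_image_sub_le_of_norm_hasDerivWithin_le
          hasDeriv_tangent_error deriv_sub_le ha hb
    _ = B * (b - a) ^ 2 := by rw [Real.norm_of_nonneg (sub_nonneg.2 hab)]; ring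

theorem norm_deriv_left_le_of_norm_deriv2_le {a b A B : ℝ} (hab : a < b)
    (hf : ∀ t ∈ Icc a b, HasDerivWithinAt f (f' t) (Icc a b) t)
    (hf' : ∀ t ∈ Icc a b, HasDerivWithinAt f' (f'' t) (Icc a b) t)
    (ha : ‖f a‖ ≤ A) (hb : ‖f b‖ ≤ A) (hB : ∀ t ∈ Icc a b, ‖f'' t‖ ≤ B) :
    ‖f' a‖ ≤ 2 * A / (b - a) + B * (b - a) := by
  have hpos : 0 < b - a := sub_pos.2 hab
  have hmul : (b - a) * ‖f' a‖ ≤ 2 * A + B * (b - a) ^ 2 :=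
    calc (b - a) * ‖f' a‖ = ‖(f b - f a) - (f b - f a - (b - a) • f' a)‖ := by
          rw [sub_sub_cancel, norm_smul, Real.norm_of_nonneg hpos.le]
      _ ≤ ‖f b‖ + ‖f a‖ + ‖f b - f a - (b - a) • f' a‖ :=
          (norm_sub_le _ _).trans (by gcongr; exact norm_sub_le _ _)
      _ ≤ 2 * A + B * (b - a) ^ 2 := by
          linarith [norm_sub_sub_smul_deriv_le_of_norm_deriv2_le hab.le hf hf' hB]
  calc ‖f' a‖ ≤ (2 * A + B * (b - a) ^ 2) / (b - a) := (le_div_iff₀' hpos).2 hmul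
    _ = 2 * A / (b - a) + B * (b - a) := by field_simp

theorem isBigO_atTop_deriv_of_deriv2 {g : ℝ → F} {a : ℝ}
    (hg : AntitoneOn (fun x => ‖g x‖) (Ici a))
    (hf : ∀ᶠ x in atTop, HasDerivAt f (f' x) x) (hf' : ∀ᶠ x in atTop, HasDerivAt f' (f'' x) x)
    (hfg : f =O[atTop] g) (hf''g : f'' =O[atTop] g) :
    f' =O[atTop] g := by
  obtain ⟨A, hA₀, hA⟩ := hfg.exists_nonneg
  obtain ⟨B, hB₀, hB⟩ := hf''g.exists_nonneg
  refine .of_bound (2 * A + B) ?_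
  filter_upwards [eventually_ge_atTop a, eventually_forall_ge_atTop.2 hf,
    eventually_forall_ge_atTop.2 hf', eventually_forall_ge_atTop.2 hA.bound,
    eventually_forall_ge_atTop.2 hB.bound] with x hax hfx hf'x hAx hBx
  have hle : ∀ t, x ≤ t → ‖g t‖ ≤ ‖g x‖ := fun t ht => hg hax (hax.trans ht) ht
  have hA_le : ∀ t, x ≤ t → ‖f t‖ ≤ A * ‖g x‖ := fun t ht =>
    (hAx t ht).trans (mul_le_mul_of_nonneg_left (hle t ht) hA₀)
  have hB_le : ∀ t, x ≤ t → ‖f'' t‖ ≤ B * ‖g x‖ := fun t ht =>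
    (hBx t ht).trans (mul_le_mul_of_nonneg_left (hle t ht) hB₀)
  have hlandau := norm_deriv_left_le_of_norm_deriv2_le (lt_add_one x)
    (fun t ht => (hfx t ht.1).hasDerivWithinAt) (fun t ht => (hf'x t ht.1).hasDerivWithinAt)
    (hA_le x le_rfl) (hA_le _ (lt_add_one x).le) (fun t ht => hB_le t ht.1)
  calc ‖f' x‖ ≤ 2 * (A * ‖g x‖) / (x + 1 - x) + B * ‖g x‖ * (x + 1 - x) := hlandau
    _ = (2 * A + B) * ‖g x‖ := by rw [add_sub_cancel_left]; ring

end Landau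

section PowerScale

theorem isBigO_atTop_iff_exists_pos {E : Type*} [SeminormedAddCommGroup E] {f : ℝ → E} {g : ℝ → ℝ}
    (hg : ∀ x, 0 < x → 0 ≤ g x) :
    f =O[atTop] g ↔
      ∃ x₀ : ℝ, 0 < x₀ ∧ ∃ K : ℝ, 0 < K ∧ ∀ x : ℝ, x₀ ≤ x → ‖f x‖ ≤ K * g x := by
  constructor
  · intro h
    obtain ⟨K, hK, hbound⟩ := h.exists_pos
    obtain ⟨x₀, hx₀⟩ := eventually_atTop.1 hbound.bound
    refine ⟨max x₀ 1, by positivity, K, hK, fun x hx => ?_⟩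
    have hpos : 0 < x := zero_lt_one.trans_le ((le_max_right _ _).trans hx)
    simpa only [Real.norm_of_nonneg (hg x hpos)] using hx₀ x ((le_max_left _ _).trans hx)
  · rintro ⟨x₀, -, K, hK, h⟩
    refine .of_bound K ((eventually_ge_atTop x₀).mono fun x hx => (h x hx).trans ?_)
    exact mul_le_mul_of_nonneg_left (Real.le_norm_self _) hK.le

theorem antitoneOn_norm_zpow_neg (n : ℕ) :
    AntitoneOn (fun x : ℝ => ‖x ^ (-n : ℤ)‖) (Ioi 0) := by
  intro x hx y _ hxy
  have hx₀ : 0 < x := hx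
  simp only [zpow_neg, zpow_natCast, norm_inv, norm_pow, Real.norm_of_nonneg hx₀.le,
    Real.norm_of_nonneg (hx₀.le.trans hxy)]
  gcongr

theorem isBigO_atTop_zpow_of_le {m n : ℤ} (h : m ≤ n) :
    (fun x : ℝ => x ^ m) =O[atTop] fun x => x ^ n := by
  refine .of_bound' ((eventually_ge_atTop 1).mono fun x hx => ?_)
  rw [norm_zpow, norm_zpow, Real.norm_of_nonneg (zero_le_one.trans hx)]
  exact zpow_le_zpow_right₀ hx h

theorem isBigO_zpow_comp_div_const {E : Type*} [SeminormedAddCommGroup E] {f : ℝ → E}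
    {n : ℤ} {c : ℝ} (hc : 0 < c) (hf : f =O[atTop] fun x => x ^ n) :
    (fun x => f (x / c)) =O[atTop] fun x => x ^ n := by
  refine (hf.comp_tendsto (tendsto_id.atTop_div_const hc)).trans ?_
  simp only [Function.comp_def, id_eq, div_eq_inv_mul, mul_zpow]
  exact isBigO_const_mul_self _ _ _

theorem isBigO_eval_ofReal_inv {P : ℂ[X]} {n : ℕ} (h : X ^ n ∣ P) :
    (fun x : ℝ => P.eval (x : ℂ)⁻¹) =O[atTop] fun x => x ^ (-n : ℤ) := by
  obtain ⟨Q, rfl⟩ := h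
  have hinv : Tendsto (fun x : ℝ => (x : ℂ)⁻¹) atTop (𝓝 0) := by
    simpa using tendsto_inv_atTop_zero.ofReal
  have hQ : (fun x : ℝ => Q.eval (x : ℂ)⁻¹) =O[atTop] fun _ => (1 : ℝ) :=
    ((Q.continuous.tendsto 0).comp hinv).isBigO_one ℝ
  have hpow : (fun x : ℝ => (x : ℂ)⁻¹ ^ n) =O[atTop] fun x => x ^ (-n : ℤ) :=
    isBigO_of_le _ fun x => by simp
  simpa using hpow.mul hQ

end PowerScale

/-- The derivation `d/dx` in the coordinate `s = 1/x` at infinity: it sends a polynomial `P` in `s`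
to `-s² P'(s)`. -/
noncomputable def derivAtInfinity (R : Type*) [CommRing R] : Derivation R R[X] R[X] :=
  (-X ^ 2 : R[X]) • derivative'

theorem derivAtInfinity_monomial {R : Type*} [CommRing R] (n : ℕ) (a : R) :
    derivAtInfinity R (monomial n a) = monomial (n + 1) (-(n * a)) := by
  rcases n with _ | n
  · simp [derivAtInfinity]
  · simp [derivAtInfinity, X_pow_mul_monomial, mul_comm]

theorem hasDerivAt_eval_ofReal_inv (P : ℂ[X]) {x : ℝ} (hx : x ≠ 0) :
    HasDerivAt (fun t : ℝ => P.eval (t : ℂ)⁻¹) ((derivAtInfinity ℂ P).eval (x : ℂ)⁻¹) x := by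
  have hinv : HasDerivAt (fun z : ℂ => z⁻¹) (-((x : ℂ) ^ 2)⁻¹) x :=
    hasDerivAt_inv (Complex.ofReal_ne_zero.2 hx)
  refine (((P.hasDerivAt _).comp (x : ℂ) hinv).comp_ofReal).congr_deriv ?_
  simp [derivAtInfinity, mul_comm]

section PainleveII

/-- The truncation after `x⁻⁷` of the formal power series solution at infinity of the Painlevé II
equation with parameter `α`, as a polynomial in `s = 1/x`. -/
noncomputable def painleveIITruncation (α : ℂ) : ℂ[X] :=
  monomial 1 α + monomial 4 (2 * α * (1 - α ^ 2))
    + monomial 7 (4 * α * (1 - α ^ 2) * (10 - 3 * α ^ 2))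

theorem eval_painleveIITruncation_inv (α z : ℂ) :
    (painleveIITruncation α).eval z⁻¹ = α / z + 2 * α * (1 - α ^ 2) * z ^ (-4 : ℤ)
      + 4 * α * (1 - α ^ 2) * (10 - 3 * α ^ 2) * z ^ (-7 : ℤ) := by
  have hpow : ∀ n : ℕ, z⁻¹ ^ n = z ^ (-n : ℤ) := fun n => by simp
  simp only [painleveIITruncation, eval_add, eval_monomial, pow_one,
    ← div_eq_mul_inv, hpow 4, hpow 7]
  rfl

-- The defect of the truncation in the equation, multiplied by `s = 1/x` to clear the term `x w`.
theorem X_pow_ten_dvd_painleveIITruncation_defect (α : ℂ) :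
    X ^ 10 ∣ painleveIITruncation α + X * (2 * painleveIITruncation α ^ 3 - C α
      - derivAtInfinity ℂ (derivAtInfinity ℂ (painleveIITruncation α))) := by
  set b : ℂ := 2 * α * (1 - α ^ 2) with hb
  set c : ℂ := 4 * α * (1 - α ^ 2) * (10 - 3 * α ^ 2) with hc
  refine ⟨C (6 * α ^ 2 * c - 56 * c) + C (6 * α) * (C b + C c * X ^ 3) ^ 2
    + 2 * X ^ 3 * (C b + C c * X ^ 3) ^ 3, ?_⟩
  simp only [painleveIITruncation, map_add, derivAtInfinity_monomial]
  simp only [← C_mul_X_pow_eq_monomial, hb, hc, map_mul, map_sub, map_neg, map_pow, map_one,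
    map_ofNat, map_natCast]
  push_cast
  ring

theorem X_pow_eight_dvd_painleveIITruncation_riccati (α : ℂ) :
    X ^ 8 ∣ derivAtInfinity ℂ (painleveIITruncation α) - painleveIITruncation α ^ 2
      + (monomial 2 (α * (1 + α)) + monomial 5 (4 * α * (1 - α ^ 2) * (2 + α))) := by
  set b : ℂ := 2 * α * (1 - α ^ 2) with hb
  set c : ℂ := 4 * α * (1 - α ^ 2) * (10 - 3 * α ^ 2) with hc
  refine ⟨-C (7 * c + 2 * α * c) - (C b + C c * X ^ 3) ^ 2, ?_⟩
  simp only [painleveIITruncation, map_add, derivAtInfinity_monomial]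
  simp only [← C_mul_X_pow_eq_monomial, hb, hc, map_mul, map_add, map_sub, map_neg, map_pow,
    map_one, map_ofNat, map_natCast]
  push_cast
  ring

theorem isBigO_one_painleveIITruncation (α : ℂ) :
    (fun x : ℝ => (painleveIITruncation α).eval (x : ℂ)⁻¹) =O[atTop] fun _ => (1 : ℝ) := by
  simpa using isBigO_eval_ofReal_inv (P := painleveIITruncation α) (n := 0) (by simp)

variable {α : ℂ} {u u' : ℝ → ℂ}

theorem isBigO_one_of_sub_painleveIITruncation
    (hexp : (fun x : ℝ => u x - (painleveIITruncation α).eval (x : ℂ)⁻¹)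
      =O[atTop] fun x => x ^ (-10 : ℤ)) :
    u =O[atTop] fun _ => (1 : ℝ) := by
  have hzpow : (fun x : ℝ => x ^ (-10 : ℤ)) =O[atTop] fun _ => (1 : ℝ) :=
    (tendsto_zpow_atTop_zero (by norm_num)).isBigO_one ℝ
  simpa using (hexp.trans hzpow).add (isBigO_one_painleveIITruncation α)

theorem isBigO_painleveII_deriv2_remainder
    (hexp : (fun x : ℝ => u x - (painleveIITruncation α).eval (x : ℂ)⁻¹)
      =O[atTop] fun x => x ^ (-10 : ℤ)) :
    (fun x : ℝ => x * u x + 2 * u x ^ 3 - α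
        - (derivAtInfinity ℂ (derivAtInfinity ℂ (painleveIITruncation α))).eval (x : ℂ)⁻¹)
      =O[atTop] fun x => x ^ (-9 : ℤ) := by
  set w : ℝ → ℂ := fun x => (painleveIITruncation α).eval (x : ℂ)⁻¹ with hw
  have hu : u =O[atTop] fun _ => (1 : ℝ) := isBigO_one_of_sub_painleveIITruncation hexp
  have hw_one : w =O[atTop] fun _ => (1 : ℝ) := isBigO_one_painleveIITruncation α
  have hx : (fun x : ℝ => (x : ℂ)) =O[atTop] fun x => x := isBigO_of_le _ fun x => by simp
  have hfactor : (fun x => x + 2 * (u x ^ 2 + u x * w x + w x ^ 2)) =O[atTop] fun x : ℝ => x := by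
    have hcubic : (fun x => 2 * (u x ^ 2 + u x * w x + w x ^ 2)) =O[atTop] fun _ => (1 : ℝ) := by
      have hmul := hu.mul hw_one
      simpa using (((hu.pow 2).add (by simpa using hmul)).add (hw_one.pow 2)).const_mul_left 2
    exact hx.add (hcubic.trans (isLittleO_const_id_atTop 1).isBigO)
  have hdefect := hx.mul
    (isBigO_eval_ofReal_inv (X_pow_ten_dvd_painleveIITruncation_defect α))
  refine ((hfactor.mul hexp).add hdefect).congr' ?_ ?_
  · filter_upwards [eventually_ne_atTop 0] with x hx₀
    have hx₀' : (x : ℂ) ≠ 0 := Complex.ofReal_ne_zero.2 hx₀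
    simp only [hw, eval_add, eval_sub, eval_mul, eval_X, eval_C, eval_pow, eval_ofNat]
    field_simp
    ring
  · filter_upwards [eventually_ne_atTop 0] with x hx₀
    rw [mul_comm, ← zpow_add_one₀ hx₀]
    rfl

theorem isBigO_deriv_sub_painleveIITruncation
    (hu : ∀ᶠ x in atTop, HasDerivAt u (u' x) x)
    (hu' : ∀ᶠ x : ℝ in atTop, HasDerivAt u' (x * u x + 2 * u x ^ 3 - α) x)
    (hexp : (fun x : ℝ => u x - (painleveIITruncation α).eval (x : ℂ)⁻¹)
      =O[atTop] fun x => x ^ (-10 : ℤ)) :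
    (fun x : ℝ => u' x - (derivAtInfinity ℂ (painleveIITruncation α)).eval (x : ℂ)⁻¹)
      =O[atTop] fun x => x ^ (-9 : ℤ) := by
  refine isBigO_atTop_deriv_of_deriv2
    ((antitoneOn_norm_zpow_neg 9).mono (Ici_subset_Ioi.2 one_pos)) ?_ ?_
    (hexp.trans (isBigO_atTop_zpow_of_le (by norm_num))) (isBigO_painleveII_deriv2_remainder hexp)
  · filter_upwards [hu, eventually_ne_atTop 0] with x hux hx₀
    exact hux.fun_sub (hasDerivAt_eval_ofReal_inv _ hx₀)
  · filter_upwards [hu', eventually_ne_atTop 0] with x hu'x hx₀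
    exact hu'x.fun_sub (hasDerivAt_eval_ofReal_inv _ hx₀)

theorem isBigO_painleveII_deriv_sub_sq
    (hu : ∀ᶠ x in atTop, HasDerivAt u (u' x) x)
    (hu' : ∀ᶠ x : ℝ in atTop, HasDerivAt u' (x * u x + 2 * u x ^ 3 - α) x)
    (hexp : (fun x : ℝ => u x - (painleveIITruncation α).eval (x : ℂ)⁻¹)
      =O[atTop] fun x => x ^ (-10 : ℤ)) :
    (fun x : ℝ => u' x - u x ^ 2 + (α * (1 + α) * (x : ℂ) ^ (-2 : ℤ)
        + 4 * α * (1 - α ^ 2) * (2 + α) * (x : ℂ) ^ (-5 : ℤ)))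
      =O[atTop] fun x => x ^ (-8 : ℤ) := by
  set w : ℝ → ℂ := fun x => (painleveIITruncation α).eval (x : ℂ)⁻¹ with hw
  have hderiv := (isBigO_deriv_sub_painleveIITruncation hu hu' hexp).trans
    (isBigO_atTop_zpow_of_le (show (-9 : ℤ) ≤ -8 by norm_num))
  have hsq : (fun x => u x ^ 2 - w x ^ 2) =O[atTop] fun x : ℝ => x ^ (-8 : ℤ) := by
    have hsum : (fun x => u x + w x) =O[atTop] fun _ => (1 : ℝ) :=
      (isBigO_one_of_sub_painleveIITruncation hexp).add (isBigO_one_painleveIITruncation α)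
    simpa only [sq_sub_sq, one_mul] using
      hsum.mul (hexp.trans (isBigO_atTop_zpow_of_le (show (-10 : ℤ) ≤ -8 by norm_num)))
  have hpoly := isBigO_eval_ofReal_inv (X_pow_eight_dvd_painleveIITruncation_riccati α)
  refine ((hderiv.sub hsq).add hpoly).congr_left fun x => ?_
  have hpow : ∀ n : ℕ, (x : ℂ)⁻¹ ^ n = (x : ℂ) ^ (-n : ℤ) := fun n => by simp
  simp only [hw, eval_add, eval_sub, eval_pow, eval_monomial, hpow]
  push_cast
  ring

end PainleveII

theorem deriv_sub_sq_div_two_of_rescaled {u v : ℝ → ℂ} {k x : ℝ} {u'x : ℂ}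
    (hv : ∀ t : ℝ, v t = ((2 / k : ℝ) : ℂ) * u (t / k)) (hu : HasDerivAt u u'x (x / k)) :
    deriv v x - v x ^ 2 / 2 = 2 / k ^ 2 * (u'x - u (x / k) ^ 2) := by
  have hderiv : HasDerivAt v (((2 / k : ℝ) : ℂ) * ((1 / k : ℝ) • u'x)) x := by
    rw [show v = fun t => ((2 / k : ℝ) : ℂ) * u (t / k) from funext hv]
    exact (hu.scomp x ((hasDerivAt_id x).div_const k)).const_mul _
  rw [hderiv.deriv, hv x, Complex.real_smul]
  push_cast
  ring

theorem cbrt3_pos : 0 < cbrt3 := Real.rpow_pos_of_pos (by norm_num) _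

theorem cbrt3_pow_three : cbrt3 ^ 3 = 3 := by
  rw [cbrt3, ← Real.rpow_mul_natCast (by norm_num)]
  norm_num

theorem rescaled_riccati_coeffs {μ α : ℂ} (hα : α = -Complex.I * μ / 2) :
    Complex.I * μ + μ ^ 2 / 2 = -2 * (α * (1 + α)) ∧
      (4 + μ ^ 2) * (6 * Complex.I * μ + 3 * μ ^ 2 / 2)
        = -6 * (4 * α * (1 - α ^ 2) * (2 + α)) := by
  have hI : Complex.I * μ = -2 * α := by rw [hα]; ring
  have hsq : μ ^ 2 = -4 * α ^ 2 := by rw [hα]; linear_combination μ ^ 2 * Complex.I_sq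
  constructor
  · rw [hI, hsq]; ring
  · rw [mul_assoc 6, hI, hsq]; ring

theorem stmt_6_general {μ α : ℂ} (hα : α = -Complex.I * μ / 2) {u u' : ℝ → ℂ}
    (hu : ∀ᶠ x in atTop, HasDerivAt u (u' x) x)
    (hu' : ∀ᶠ x : ℝ in atTop, HasDerivAt u' (x * u x + 2 * u x ^ 3 - α) x)
    (hexp : (fun x : ℝ => u x - α / x - 2 * α * (1 - α ^ 2) * (x : ℂ) ^ (-4 : ℤ)
        - 4 * α * (1 - α ^ 2) * (10 - 3 * α ^ 2) * (x : ℂ) ^ (-7 : ℤ))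
      =O[atTop] fun x => x ^ (-10 : ℤ))
    {v : ℝ → ℂ} (hv : ∀ x : ℝ, v x = ((2 / cbrt3 : ℝ) : ℂ) * u (x / cbrt3)) :
    (fun x : ℝ => (deriv v x - v x ^ 2 / 2)
        - ((Complex.I * μ + μ ^ 2 / 2) * (x : ℂ) ^ (-2 : ℤ)
          + (4 + μ ^ 2) * (6 * Complex.I * μ + 3 * μ ^ 2 / 2) * (x : ℂ) ^ (-5 : ℤ)))
      =O[atTop] fun x => x ^ (-8 : ℤ) := by
  have hk₀ : (cbrt3 : ℂ) ≠ 0 := Complex.ofReal_ne_zero.2 cbrt3_pos.ne'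
  have hk3 : (cbrt3 : ℂ) ^ 3 = 3 := mod_cast cbrt3_pow_three
  have hriccati := isBigO_painleveII_deriv_sub_sq hu hu'
    (hexp.congr_left fun x => by rw [eval_painleveIITruncation_inv]; ring)
  refine ((isBigO_zpow_comp_div_const cbrt3_pos hriccati).const_mul_left
    (2 / cbrt3 ^ 2 : ℂ)).congr' ?_ .rfl
  filter_upwards [(tendsto_id.atTop_div_const cbrt3_pos).eventually hu,
    eventually_ne_atTop 0] with x hux hx₀
  have hx₀' : (x : ℂ) ≠ 0 := Complex.ofReal_ne_zero.2 hx₀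
  have hscale₂ : (2 / cbrt3 ^ 2 : ℂ) * ((x / cbrt3 : ℝ) : ℂ) ^ (-2 : ℤ)
      = 2 * (x : ℂ) ^ (-2 : ℤ) := by
    push_cast
    field_simp
  have hscale₅ : (2 / cbrt3 ^ 2 : ℂ) * ((x / cbrt3 : ℝ) : ℂ) ^ (-5 : ℤ)
      = 6 * (x : ℂ) ^ (-5 : ℤ) := by
    push_cast
    field_simp
    rw [hk3]
    norm_num
  rw [id_eq] at hux
  obtain ⟨ha₂, ha₅⟩ := rescaled_riccati_coeffs hα
  rw [deriv_sub_sq_div_two_of_rescaled hv hux, ha₂, ha₅]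
  linear_combination α * (1 + α) * hscale₂ + 4 * α * (1 - α ^ 2) * (2 + α) * hscale₅

/-- Under the asymptotic expansion (A+) with `α = -iμ/2`,
`v'(x) - v(x)²/2 = a₂ x⁻² + a₅ x⁻⁵ + O(x⁻⁸)` as `x → +∞`,
where `a₂ = iμ + μ²/2` and `a₅ = (4+μ²)(6iμ + 3μ²/2)`. -/
theorem stmt_6 (μ : ℝ) (α : ℂ) (hα : α = -Complex.I * μ / 2)
    (u : ℝ → ℂ) (hu : ContDiff ℝ 2 u)
    (hP : ∀ x : ℝ, deriv (deriv u) x = (x : ℂ) * u x + 2 * (u x) ^ 3 - α)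
    (him : ∀ x : ℝ, (u x).re = 0)
    (hAp : ∃ x₀ : ℝ, 0 < x₀ ∧ ∃ K : ℝ, 0 < K ∧ ∀ x : ℝ, x₀ ≤ x →
      ‖u x - α / x - 2 * α * (1 - α ^ 2) * (x : ℂ) ^ (-4 : ℤ)
        - 4 * α * (1 - α ^ 2) * (10 - 3 * α ^ 2) * (x : ℂ) ^ (-7 : ℤ)‖
        ≤ K * x ^ (-10 : ℤ))
    (v : ℝ → ℂ)
    (hv : ∀ x : ℝ, v x = ((2 / cbrt3 : ℝ) : ℂ) * u (x / cbrt3)) :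
    ∃ x₁ : ℝ, 0 < x₁ ∧ ∃ K' : ℝ, 0 < K' ∧ ∀ x : ℝ, x₁ ≤ x →
      ‖(deriv v x - (v x) ^ 2 / 2)
        - ((Complex.I * μ + (μ:ℂ) ^ 2 / 2) * (x : ℂ) ^ (-2 : ℤ)
          + (4 + (μ:ℂ) ^ 2) * (6 * Complex.I * μ + 3 * (μ:ℂ) ^ 2 / 2) * (x : ℂ) ^ (-5 : ℤ))‖
        ≤ K' * x ^ (-8 : ℤ) := by
  exact (isBigO_atTop_iff_exists_pos fun x hx => by positivity).1 (stmt_6_general hα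
    (.of_forall fun x => (hu.differentiable two_ne_zero x).hasDerivAt)
    (.of_forall fun x => hP x ▸ (hu.differentiable_deriv_two x).hasDerivAt)
    ((isBigO_atTop_iff_exists_pos fun x hx => by positivity).2 hAp) hv)
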